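/- Let X and A be metric spaces (Borel subsets of Polish spaces), and let P(X) denote the space of Borel probability measures on X endowed with the topology of weak convergence. If c : X×A → ℝ is bounded below by a constant and K-inf-compact on X×A (respectively, inf-compact on X×A), then the function 𝔠 : P(X)×A → ℝ∪{+∞} defined by 𝔠(z,a) := ∫_X c(x,a) z(dx) is bounded below by the same constant and is K-inf-compact on P(X)×A (respectively, inf-compact on P(X)×A). -/

import Mathlib

open Filter Topology Set MeasureTheory
open scoped ENNReal NNReal

/-- `f` is inf-compact on `U`: all level sets `{y ∈ U : f y ≤ λ}`, `λ ∈ ℝ`, are compact. -/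
def InfCompactOn {E : Type*} [TopologicalSpace E] (f : E → EReal) (U : Set E) : Prop :=
  ∀ lam : ℝ, IsCompact {y ∈ U | f y ≤ (lam : EReal)}

/-- `u : S1 × S2 → EReal` is `K`-inf-compact on `S1 × S2`: for every nonempty compact
`K ⊆ S1` the restriction of `u` to `K × S2` is inf-compact. -/
def KInfCompact {S1 S2 : Type*} [TopologicalSpace S1] [TopologicalSpace S2]
    (u : S1 × S2 → EReal) : Prop :=
  ∀ K : Set S1, K.Nonempty → IsCompact K →
    InfCompactOn u {p : S1 × S2 | p.1 ∈ K}

/-- The one-step cost of the COMDP: `𝔠 (z, a) = ∫ c (x, a) z(dx)`, an `ℝ ∪ {+∞}`-valued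
integral of the function `c (·, a)`, which is bounded below by `b`. -/
noncomputable def cHat {X A : Type*} [MetricSpace X] [MeasurableSpace X] [BorelSpace X]
    (c : X × A → ℝ) (b : ℝ) (p : ProbabilityMeasure X × A) : EReal :=
  (b : EReal) + ((∫⁻ x, ENNReal.ofReal (c (x, p.2) - b) ∂(p.1 : Measure X) : ℝ≥0∞) : EReal)

/-- Lipschitz envelope of a nonnegative function, truncated at `n`. -/
noncomputable def lipEnv {E : Type*} [MetricSpace E] (g : E → ℝ≥0) (n : ℕ) (p : E) : ℝ≥0 :=
  ⨅ q, (min (g q) n + n * nndist p q)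

section env
variable {E : Type*} [MetricSpace E] (g : E → ℝ≥0)

lemma lipEnv_le_of (n : ℕ) (p q : E) : lipEnv g n p ≤ min (g q) n + n * nndist p q :=
  ciInf_le (OrderBot.bddBelow _) q

lemma lipEnv_le (n : ℕ) (p : E) : lipEnv g n p ≤ min (g p) n := by
  simpa using lipEnv_le_of g n p p

lemma lipEnv_lip (n : ℕ) (p p' : E) : lipEnv g n p ≤ lipEnv g n p' + n * nndist p p' := by
  have : Nonempty E := ⟨p⟩
  rw [← tsub_le_iff_right]
  refine le_ciInf fun q => ?_
  rw [tsub_le_iff_right]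
  refine (lipEnv_le_of g n p q).trans ?_
  rw [add_assoc, ← mul_add]
  gcongr
  rw [add_comm]
  exact nndist_triangle _ _ _

lemma lipEnv_mono (p : E) : Monotone fun n => lipEnv g n p := by
  intro m n hmn
  have : Nonempty E := ⟨p⟩
  refine le_ciInf fun q => ?_
  refine (lipEnv_le_of g m p q).trans ?_
  gcongr

lemma lipEnv_cont (n : ℕ) : Continuous (lipEnv g n) := by
  have h : LipschitzWith (n : ℝ≥0) (fun p => (lipEnv g n p : ℝ)) := by
    refine LipschitzWith.of_le_add_mul _ fun x y => ?_
    have := lipEnv_lip g n x y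
    exact_mod_cast this
  exact continuous_induced_rng.2 h.continuous

lemma lipEnv_iSup (hg : LowerSemicontinuous g) (p : E) :
    ⨆ n, (lipEnv g n p : ℝ≥0∞) = g p := by
  have : Nonempty E := ⟨p⟩
  apply le_antisymm
  · exact iSup_le fun n => by exact_mod_cast (lipEnv_le g n p).trans (min_le_left _ _)
  · refine le_of_forall_lt fun t ht => ?_
    obtain ⟨t', htt', ht'⟩ := exists_between ht
    lift t' to ℝ≥0 using (ht'.trans_le le_top).ne
    have ht'' : t' < g p := by exact_mod_cast ht'
    obtain ⟨δ, hδ, hball⟩ := Metric.eventually_nhds_iff.1 (hg p t' ht'')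
    obtain ⟨n, hn⟩ := exists_nat_ge (max (t' : ℝ) (t' / δ))
    refine htt'.trans_le (le_iSup_of_le n ?_)
    norm_cast
    refine le_ciInf fun q => ?_
    rcases lt_or_ge (dist q p) δ with h | h
    · refine le_add_right (le_min (hball h).le ?_)
      exact_mod_cast (le_max_left _ _).trans hn
    · refine le_add_left ?_
      rw [← NNReal.coe_le_coe]
      push_cast
      rw [dist_comm] at h
      have h1 := (le_max_right _ _).trans hn
      rw [div_le_iff₀ hδ] at h1
      exact h1.trans (by gcongr)

end env

section main
variable {X A : Type*} [MetricSpace X] [MeasurableSpace X] [BorelSpace X] [MetricSpace A]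

lemma lsc_env_int (g : X × A → ℝ≥0) (n : ℕ) : LowerSemicontinuous
    fun p : ProbabilityMeasure X × A => ∫⁻ x, (lipEnv g n (x, p.2) : ℝ≥0∞) ∂(p.1 : Measure X) := by
  rintro ⟨z0, a0⟩ y hy
  let F : BoundedContinuousFunction X ℝ≥0 :=
    BoundedContinuousFunction.mkOfBound
      ⟨fun x => lipEnv g n (x, a0), (lipEnv_cont g n).comp (by fun_prop)⟩ n (by
        intro x x'
        have h1 := (lipEnv_le g n (x, a0)).trans (min_le_right _ _)
        have h2 := (lipEnv_le g n (x', a0)).trans (min_le_right _ _)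
        rw [NNReal.dist_eq]
        have h3 : ((lipEnv g n (x, a0) : ℝ≥0) : ℝ) ≤ n := by exact_mod_cast h1
        have h4 : ((lipEnv g n (x', a0) : ℝ≥0) : ℝ) ≤ n := by exact_mod_cast h2
        have h5 := (lipEnv g n (x, a0)).2
        have h6 := (lipEnv g n (x', a0)).2
        simp only [ContinuousMap.coe_mk]
        rw [abs_le]
        constructor <;> simp only [NNReal.val_eq_coe] at * <;> linarith)
  have hF : Tendsto (fun p : ProbabilityMeasure X × A => ∫⁻ x, (F x : ℝ≥0∞) ∂(p.1 : Measure X))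
      (𝓝 (z0, a0)) (𝓝 (∫⁻ x, (F x : ℝ≥0∞) ∂(z0 : Measure X))) :=
    (ProbabilityMeasure.tendsto_iff_forall_lintegral_tendsto.1
      (continuous_fst.tendsto (z0, a0))) F
  have hD : Tendsto (fun p : ProbabilityMeasure X × A => ((n * nndist p.2 a0 : ℝ≥0) : ℝ≥0∞))
      (𝓝 (z0, a0)) (𝓝 ((n * nndist a0 a0 : ℝ≥0) : ℝ≥0∞)) := by
    have : Continuous (fun p : ProbabilityMeasure X × A => ((n * nndist p.2 a0 : ℝ≥0) : ℝ≥0∞)) := by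
      fun_prop
    exact this.tendsto (z0, a0)
  have hS := ENNReal.Tendsto.sub hF hD (Or.inr (by simp))
  simp only [nndist_self, mul_zero, ENNReal.coe_zero, tsub_zero] at hS
  filter_upwards [hS.eventually_const_lt hy] with p hp
  refine hp.trans_le ?_
  rw [tsub_le_iff_right]
  calc ∫⁻ x, (F x : ℝ≥0∞) ∂(p.1 : Measure X)
      ≤ ∫⁻ x, ((lipEnv g n (x, p.2) : ℝ≥0∞) + ((n * nndist p.2 a0 : ℝ≥0) : ℝ≥0∞))
          ∂(p.1 : Measure X) := by
        refine lintegral_mono fun x => ?_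
        have := lipEnv_lip g n (x, a0) (x, p.2)
        have h2 : nndist (x, a0) (x, p.2) = nndist p.2 a0 := by
          rw [nndist_comm p.2 a0]; ext; simp [Prod.dist_eq]
        rw [h2] at this
        change ((lipEnv g n (x, a0) : ℝ≥0) : ℝ≥0∞) ≤ _
        exact_mod_cast this
    _ = _ := by
        rw [lintegral_add_right _ measurable_const]
        simp

lemma lsc_int (g : X × A → ℝ≥0) (hg : LowerSemicontinuous g) : LowerSemicontinuous
    fun p : ProbabilityMeasure X × A => ∫⁻ x, (g (x, p.2) : ℝ≥0∞) ∂(p.1 : Measure X) := by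
  have : (fun p : ProbabilityMeasure X × A => ∫⁻ x, (g (x, p.2) : ℝ≥0∞) ∂(p.1 : Measure X)) =
      fun p => ⨆ n, ∫⁻ x, (lipEnv g n (x, p.2) : ℝ≥0∞) ∂(p.1 : Measure X) := by
    ext p
    rw [← lintegral_iSup]
    · simp_rw [lipEnv_iSup g hg]
    · intro n
      have : Continuous fun x => (lipEnv g n (x, p.2) : ℝ≥0∞) :=
        ENNReal.continuous_coe.comp ((lipEnv_cont g n).comp (by fun_prop))
      exact this.measurable
    · intro m n hmn x
      exact ENNReal.coe_le_coe.2 (lipEnv_mono g _ hmn)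
  rw [this]
  exact lowerSemicontinuous_iSup fun n => lsc_env_int g n

lemma cHat_le_iff (c : X × A → ℝ) (b lam : ℝ) (p : ProbabilityMeasure X × A) :
    cHat c b p ≤ (lam : EReal) ↔ b ≤ lam ∧
      ∫⁻ x, ENNReal.ofReal (c (x, p.2) - b) ∂(p.1 : Measure X) ≤ ENNReal.ofReal (lam - b) := by
  unfold cHat
  generalize (∫⁻ x, ENNReal.ofReal (c (x, p.2) - b) ∂(p.1 : Measure X)) = I
  induction I with
  | top => simp
  | coe r =>
    have e : (((r : ℝ≥0) : ℝ≥0∞) : EReal) = ((r : ℝ) : EReal) := rfl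
    rw [e, ← EReal.coe_add, EReal.coe_le_coe_iff, ENNReal.ofReal, ENNReal.coe_le_coe]
    have hr := r.2
    constructor
    · intro h
      have : b ≤ lam := by simp only [NNReal.val_eq_coe] at hr; linarith
      refine ⟨this, NNReal.le_toNNReal_of_coe_le (by linarith)⟩
    · rintro ⟨h1, h2⟩
      have := (Real.le_toNNReal_iff_coe_le (by linarith)).1 h2
      linarith

lemma isClosed_level {c : X × A → ℝ} (hc : KInfCompact (fun p : X × A => ((c p : ℝ) : EReal)))
    (l : ℝ) : IsClosed {p | c p ≤ l} := by
  apply IsSeqClosed.isClosed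
  intro u p hu hp
  have h1 : Tendsto (fun n => (u n).1) atTop (𝓝 p.1) := (continuous_fst.tendsto p).comp hp
  have h2 := (hc _ (insert_nonempty _ _) h1.isCompact_insert_range l).isClosed
  have h3 := h2.mem_of_tendsto hp (Eventually.of_forall fun n =>
    ⟨Or.inr ⟨n, rfl⟩, EReal.coe_le_coe_iff.2 (hu n)⟩)
  exact EReal.coe_le_coe_iff.1 h3.2

lemma isClosed_cHat {c : X × A → ℝ} (b : ℝ)
    (hc : KInfCompact (fun p : X × A => ((c p : ℝ) : EReal))) (lam : ℝ) :
    IsClosed {p | cHat c b p ≤ (lam : EReal)} := by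
  have hl : LowerSemicontinuous fun p => (c p - b).toNNReal := by
    have h0 : LowerSemicontinuous c :=
      lowerSemicontinuous_iff_isClosed_preimage.2 fun y => isClosed_level hc y
    have hm : Monotone fun t : ℝ => (t - b).toNNReal := fun s t hst =>
      Real.toNNReal_mono (by linarith)
    have hcont : Continuous fun t : ℝ => (t - b).toNNReal := by fun_prop
    exact hcont.comp_lowerSemicontinuous h0 hm
  by_cases hbl : b ≤ lam
  · simp_rw [cHat_le_iff, hbl, true_and]
    exact (lsc_int _ hl).isClosed_preimage (ENNReal.ofReal (lam - b))
  · simp [cHat_le_iff, hbl]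

lemma exists_subseq {c : X × A → ℝ} (b : ℝ)
    (hc : KInfCompact (fun p : X × A => ((c p : ℝ) : EReal))) (lam : ℝ)
    {K : Set (ProbabilityMeasure X)} (hK : IsCompact K) (z : ℕ → ProbabilityMeasure X) (a : ℕ → A)
    (hz : ∀ n, z n ∈ K) (hza : ∀ n, cHat c b (z n, a n) ≤ (lam : EReal)) :
    ∃ a0, ∃ φ : ℕ → ℕ, StrictMono φ ∧ Tendsto (a ∘ φ) atTop (𝓝 a0) := by
  by_contra hno
  set M : ℝ := 2 * (lam - b) + 1 + b with hM
  have key : ∀ x : X, ∃ N : ℕ, ∃ U, IsOpen U ∧ x ∈ U ∧ ∀ y ∈ U, ∀ n ≥ N, M ≤ c (y, a n) := by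
    intro x
    by_contra hx
    push Not at hx
    have hx' : ∀ k : ℕ, ∃ y, dist y x < 1 / ((k : ℝ) + 1) ∧ ∃ n ≥ k, c (y, a n) < M := by
      intro k
      obtain ⟨y, hy, n, hn, hlt⟩ := hx k (Metric.ball x (1 / ((k : ℝ) + 1))) Metric.isOpen_ball
        (Metric.mem_ball_self Nat.one_div_pos_of_nat)
      exact ⟨y, hy, n, hn, hlt⟩
    choose y hy m hm hlt using hx'
    have hyx : Tendsto y atTop (𝓝 x) := by
      rw [tendsto_iff_dist_tendsto_zero]
      exact squeeze_zero (fun _ => dist_nonneg) (fun k => (hy k).le)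
        tendsto_one_div_add_atTop_nhds_zero_nat
    have hcomp := hc _ (insert_nonempty _ _) hyx.isCompact_insert_range M
    obtain ⟨q, -, ψ, hψ, hq⟩ := hcomp.tendsto_subseq (x := fun k => (y k, a (m k)))
      (fun k => ⟨Or.inr ⟨k, rfl⟩, EReal.coe_le_coe_iff.2 (hlt k).le⟩)
    have hmt : Tendsto (m ∘ ψ) atTop atTop :=
      (tendsto_atTop_mono hm tendsto_id).comp hψ.tendsto_atTop
    obtain ⟨θ, hθ, hθ'⟩ := strictMono_subseq_of_tendsto_atTop hmt
    refine hno ⟨q.2, m ∘ ψ ∘ θ, hθ', ?_⟩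
    exact ((continuous_snd.tendsto q).comp hq).comp hθ.tendsto_atTop
  obtain ⟨z0, hz0, hcl⟩ := hK.exists_mapClusterPt (f := atTop) (u := z)
    (tendsto_principal.2 (Eventually.of_forall hz))
  let V : ℕ → Set X := fun N => interior {y | ∀ n ≥ N, M ≤ c (y, a n)}
  have hVm : Monotone V := fun N N' h => interior_mono fun y hy n hn => hy n (h.trans hn)
  have hVu : ⋃ N, V N = univ := by
    refine eq_univ_of_forall fun x => ?_
    obtain ⟨N, U, hU, hxU, h⟩ := key x
    exact mem_iUnion.2 ⟨N, mem_interior.2 ⟨U, h, hU, hxU⟩⟩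
  have ht := tendsto_measure_iUnion_atTop (μ := (z0 : Measure X)) hVm
  rw [hVu, measure_univ] at ht
  have hhalf : (2⁻¹ : ℝ≥0∞) < 1 := by simp
  obtain ⟨N, hN⟩ := (ht.eventually_const_lt hhalf).exists
  have hev : ∀ᶠ w : ProbabilityMeasure X in 𝓝 z0, 2⁻¹ < (w : Measure X) (V N) := by
    have h1 := ProbabilityMeasure.le_liminf_measure_open_of_tendsto
      (tendsto_id : Tendsto id (𝓝 z0) (𝓝 z0)) (isOpen_interior : IsOpen (V N))
    exact eventually_lt_of_lt_liminf (hN.trans_le h1)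
  obtain ⟨n, hn, hnN⟩ := ((hcl.frequently hev).and_eventually (eventually_ge_atTop N)).exists
  obtain ⟨hbl, hI⟩ := (cHat_le_iff c b lam _).1 (hza n)
  have h2 : ENNReal.ofReal (M - b) * (z n : Measure X) (V N) ≤
      ∫⁻ x, ENNReal.ofReal (c (x, a n) - b) ∂(z n : Measure X) := by
    rw [← setLIntegral_const]
    refine (setLIntegral_mono' isOpen_interior.measurableSet fun x hx => ?_).trans
      (setLIntegral_le_lintegral (V N) _)
    have := interior_subset hx n hnN
    exact ENNReal.ofReal_le_ofReal (by linarith)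
  have h3 : ENNReal.ofReal (M - b) * 2⁻¹ ≤ ENNReal.ofReal (lam - b) :=
    (mul_le_mul_right hn.le _).trans (h2.trans hI)
  have h4 : (2⁻¹ : ℝ≥0∞) = ENNReal.ofReal 2⁻¹ := by
    rw [ENNReal.ofReal_inv_of_pos two_pos]; simp
  rw [h4, ← ENNReal.ofReal_mul (by linarith), ENNReal.ofReal_le_ofReal_iff (by linarith)] at h3
  linarith

lemma kInf {c : X × A → ℝ} (b : ℝ)
    (hc : KInfCompact (fun p : X × A => ((c p : ℝ) : EReal))) : KInfCompact (cHat c b) := by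
  intro K hKne hK lam
  have hLc : IsClosed {p : ProbabilityMeasure X × A | p.1 ∈ K ∧ cHat c b p ≤ (lam : EReal)} :=
    (hK.isClosed.preimage continuous_fst).inter (isClosed_cHat b hc lam)
  set L := {p : ProbabilityMeasure X × A | p.1 ∈ K ∧ cHat c b p ≤ (lam : EReal)} with hL
  have hS : IsSeqCompact (Prod.snd '' L) := by
    intro a ha
    choose p hp hpa using ha
    obtain ⟨a0, φ, hφ, hlim⟩ := exists_subseq b hc lam hK (fun n => (p n).1) (fun n => (p n).2)
      (fun n => (hp n).1) (fun n => (hp n).2)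
    obtain ⟨z0, hz0, hcl⟩ := hK.exists_mapClusterPt (f := atTop) (u := fun n => (p (φ n)).1)
      (tendsto_principal.2 (Eventually.of_forall fun n => (hp (φ n)).1))
    obtain ⟨U, hU, hUz⟩ := mapClusterPt_iff_ultrafilter.1 hcl
    have hpair : Tendsto (fun n => ((p (φ n)).1, (p (φ n)).2)) U (𝓝 (z0, a0)) :=
      hUz.prodMk_nhds (hlim.mono_left hU)
    have hmem : (z0, a0) ∈ L := hLc.mem_of_tendsto hpair (Eventually.of_forall fun n => hp (φ n))
    refine ⟨a0, ⟨_, hmem, rfl⟩, φ, hφ, ?_⟩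
    have : a = fun n => (p n).2 := funext fun n => (hpa n).symm
    rw [this]
    exact hlim
  exact (hK.prod hS.isCompact).of_isClosed_subset hLc fun p hp => ⟨hp.1, ⟨p, hp, rfl⟩⟩

lemma infC {c : X × A → ℝ} (b : ℝ)
    (hc : InfCompactOn (fun p : X × A => ((c p : ℝ) : EReal)) univ) :
    InfCompactOn (cHat c b) univ := by
  have hlev : ∀ l : ℝ, IsCompact {p | c p ≤ l} := by
    intro l
    have := hc l
    simpa using this
  have hK : KInfCompact (fun p : X × A => ((c p : ℝ) : EReal)) := by
    intro K _ hK l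
    have := (hlev l).inter_left (hK.isClosed.preimage (continuous_fst : Continuous (Prod.fst : X × A → X)))
    simp only [EReal.coe_le_coe_iff]
    exact this
  intro lam
  have hu : Tendsto (fun n : ℕ => ((lam - b) * (1 / ((n : ℝ) + 1))).toNNReal) atTop (𝓝 0) := by
    have := (tendsto_one_div_add_atTop_nhds_zero_nat (𝕜 := ℝ)).const_mul (lam - b)
    have h := (continuous_real_toNNReal.tendsto _).comp this
    rw [mul_zero, Real.toNNReal_zero] at h
    exact h
  let C : ℕ → Set X := fun n => Prod.fst '' {p : X × A | c p ≤ b + ((n : ℝ) + 1)}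
  have hC : ∀ n, IsCompact (C n) := fun n => (hlev _).image continuous_fst
  have hT := isCompact_setOfPred_probabilityMeasure_mass_eq_compl_isCompact_le hu hC
    (Or.inl inferInstance)
  set T := {μ : ProbabilityMeasure X | ∀ n : ℕ,
    μ (C n)ᶜ ≤ ((lam - b) * (1 / ((n : ℝ) + 1))).toNNReal} with hTdef
  have hsub : ∀ p : ProbabilityMeasure X × A, cHat c b p ≤ (lam : EReal) → p.1 ∈ T := by
    intro p hp n
    obtain ⟨hbl, hI⟩ := (cHat_le_iff c b lam p).1 hp
    have hn : (0 : ℝ) < (n : ℝ) + 1 := by positivity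
    have h2 : ENNReal.ofReal ((n : ℝ) + 1) * (p.1 : Measure X) (C n)ᶜ ≤
        ∫⁻ x, ENNReal.ofReal (c (x, p.2) - b) ∂(p.1 : Measure X) := by
      rw [← setLIntegral_const]
      refine (setLIntegral_mono' (hC n).isClosed.measurableSet.compl fun x hx => ?_).trans
        (setLIntegral_le_lintegral _ _)
      have : ¬ c (x, p.2) ≤ b + ((n : ℝ) + 1) := fun h => hx ⟨_, h, rfl⟩
      exact ENNReal.ofReal_le_ofReal (by linarith)
    have h3 := h2.trans hI
    rw [← ENNReal.coe_le_coe, ProbabilityMeasure.ennreal_coeFn_eq_coeFn_toMeasure]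
    change _ ≤ ENNReal.ofReal _
    rw [ENNReal.ofReal_mul (by linarith), one_div, ENNReal.ofReal_inv_of_pos hn, ← div_eq_mul_inv,
      ENNReal.le_div_iff_mul_le (by simp [hn]) (by simp), mul_comm]
    exact h3
  rcases T.eq_empty_or_nonempty with hTe | hTn
  · convert isCompact_empty
    ext p
    simp only [mem_univ, true_and, mem_empty_iff_false, iff_false, mem_ofPred_eq]
    intro hp
    have := hsub p hp
    rw [hTe] at this
    exact this
  · have := kInf b hK T hTn hT lam
    convert this using 1
    ext p
    exact ⟨fun h => ⟨hsub p h.2, h.2⟩, fun h => ⟨mem_univ _, h.2⟩⟩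

end main

/-- If `c : X × A → ℝ` is bounded below by a constant `b` and `K`-inf-compact
(respectively, inf-compact) on `X × A`, then the COMDP cost `𝔠 (z, a) = ∫ c (x, a) z(dx)`
on `P(X) × A` is bounded below by the same constant and `K`-inf-compact
(respectively, inf-compact) on `P(X) × A`. -/
theorem stmt9 {X A : Type*} [MetricSpace X] [MeasurableSpace X] [BorelSpace X] [MetricSpace A]
    (c : X × A → ℝ) (b : ℝ) (hb : ∀ p, b ≤ c p) :
    (∀ p : ProbabilityMeasure X × A, (b : EReal) ≤ cHat c b p) ∧
    (KInfCompact (fun p : X × A => ((c p : ℝ) : EReal)) → KInfCompact (cHat c b)) ∧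
    (InfCompactOn (fun p : X × A => ((c p : ℝ) : EReal)) Set.univ →
      InfCompactOn (cHat c b) Set.univ) := by
  refine ⟨fun p => ?_, kInf b, infC b⟩
  unfold cHat
  exact le_add_of_nonneg_right (EReal.coe_ennreal_nonneg _)
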